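/- arXiv:1406.5583 — 2 statements merged into one kernel-verified Lean document; each statement's English description precedes it below -/
import Mathlib

section
/- Let f(p) = Σ_{m=0}^∞ pᵐ aₘ be an entire power series with quaternionic coefficients satisfying Σ_{m=0}^∞ m! |aₘ|² < ∞. Then for every imaginary unit I ∈ 𝕊 and every n ∈ ℕ, ⟨f, pⁿ⟩_I = n!\, aₙ. Consequently, if ⟨f, pⁿ⟩_I = 0 for all n ∈ ℕ then f is identically zero; i.e., the monomials pⁿ form an orthogonal basis of the slice hyperholomorphic quaternionic Fock space. -/
open MeasureTheory Real Nat

noncomputable section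

local notation "ℍ" => Quaternion ℝ

/-- The sphere of quaternionic imaginary units. -/
def quatSphere : Set ℍ := {q | q.re = 0 ∧ ‖q‖ = 1}

/-- The point `x + y I` of the slice `ℂ_I`. -/
def sliceVal (I : ℍ) (z : ℝ × ℝ) : ℍ := ((z.1 : ℍ)) + ((z.2 : ℍ)) * I

/-- The Fock inner product `⟨f, g⟩_I = (1/π) ∫ e^{-(x²+y²)} conj(g(x+yI)) f(x+yI) dx dy`. -/
def fockInner (I : ℍ) (f g : ℍ → ℍ) : ℍ :=
  π⁻¹ • ∫ z : ℝ × ℝ,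
    Real.exp (-(z.1 ^ 2 + z.2 ^ 2)) • (star (g (sliceVal I z)) * f (sliceVal I z))

/-!
Every slice `ℂ_I` is an isometric copy of `ℂ` in `ℍ` on which quaternionic conjugation is complex
conjugation, so left multiplication by `ℂ_I` makes `ℍ` a complex Banach space and `f` restricted to
the slice becomes a vector-valued power series `∑ wᵐ • aₘ`. The monomials are orthogonal for the
Gaussian weight, by invariance under rotations, and `∫ e^{-|w|²} |w|²ⁿ = π n!`, so integrating
against `w̄ⁿ` isolates `aₙ`. The interchange of sum and integral is dominated convergence, where
AM-GM splits `e^{-|w|²} |w|ᵐ |aₘ|` into a multiple of `m! |aₘ|²` and a multiple of `|w|²ᵐ / m!`.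
-/

open scoped ComplexConjugate

section Gaussian

lemma integrable_norm_pow_mul_exp_neg_mul_norm_sq {E : Type*} [NormedAddCommGroup E]
    [NormedSpace ℝ E] [FiniteDimensional ℝ E] [Nontrivial E] [MeasurableSpace E] [BorelSpace E]
    (μ : Measure E) [μ.IsAddHaarMeasure] {b : ℝ} (hb : 0 < b) (n : ℕ) :
    Integrable (fun x : E => ‖x‖ ^ n * rexp (-b * ‖x‖ ^ 2)) μ := by
  rw [integrable_fun_norm_addHaar μ (f := fun r : ℝ => r ^ n * rexp (-b * r ^ 2))]
  have h := integrableOn_rpow_mul_exp_neg_mul_sq hb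
    (neg_one_lt_zero.trans_le (Nat.cast_nonneg (Module.finrank ℝ E - 1 + n)))
  simpa only [Real.rpow_natCast, pow_add, smul_eq_mul, mul_assoc] using h

lemma integral_exp_neg_norm_sq_smul_conj_pow_mul_pow_self (n : ℕ) :
    ∫ w : ℂ, rexp (-‖w‖ ^ 2) • (conj w ^ n * w ^ n) = ((π * n ! : ℝ) : ℂ) := by
  have hq : (-2 : ℝ) < (2 * n : ℕ) := by linarith [Nat.cast_nonneg (α := ℝ) (2 * n)]
  have hΓ : Real.Gamma ((((2 * n : ℕ) : ℝ) + 2) / 2) = n ! := by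
    rw [← Real.Gamma_nat_eq_factorial]
    congr 1
    push_cast
    ring
  calc ∫ w : ℂ, rexp (-‖w‖ ^ 2) • (conj w ^ n * w ^ n)
      = ∫ w : ℂ, ((‖w‖ ^ ((2 * n : ℕ) : ℝ) * rexp (-‖w‖ ^ (2 : ℝ)) : ℝ) : ℂ) := by
        congr 1 with w
        rw [← mul_pow, Complex.conj_mul', Real.rpow_natCast, pow_mul]
        simp [mul_comm]
    _ = ((∫ w : ℂ, ‖w‖ ^ ((2 * n : ℕ) : ℝ) * rexp (-‖w‖ ^ (2 : ℝ)) : ℝ) : ℂ) :=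
        integral_complex_ofReal
    _ = ((π * n ! : ℝ) : ℂ) := by
        rw [Complex.integral_rpow_mul_exp_neg_rpow one_le_two hq, hΓ,
          mul_div_cancel_left₀ π two_ne_zero]

lemma integral_eq_zero_of_comp_eq_smul {α E 𝕜 : Type*} [MeasurableSpace α] {μ : Measure α}
    [NormedAddCommGroup E] [NormedSpace ℝ E] [NormedField 𝕜] [NormedSpace 𝕜 E]
    [SMulCommClass ℝ 𝕜 E] {e : α ≃ᵐ α} (he : MeasurePreserving e μ μ) {f : α → E} {ζ : 𝕜}
    (hζ : ζ ≠ 1) (hf : ∀ x, f (e x) = ζ • f x) : ∫ x, f x ∂μ = 0 := by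
  have h : ζ • ∫ x, f x ∂μ = ∫ x, f x ∂μ := by
    rw [← integral_smul, ← he.integral_comp' f]
    simp only [hf]
  refine (smul_eq_zero.1 (?_ : (ζ - 1) • ∫ x, f x ∂μ = 0)).resolve_left (sub_ne_zero.2 hζ)
  rw [sub_smul, one_smul, h, sub_self]

lemma exists_circle_zpow_ne_one {k : ℤ} (hk : k ≠ 0) : ∃ c : Circle, c ^ k ≠ 1 := by
  refine ⟨Circle.exp (π / k), ?_⟩
  rw [← Circle.exp_intCast_mul, mul_div_cancel₀ π (Int.cast_ne_zero.2 hk)]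
  exact Circle.exp_pi_ne_one

lemma conj_circle_pow_mul_pow (c : Circle) (n m : ℕ) :
    conj (c : ℂ) ^ n * (c : ℂ) ^ m = ((c ^ (m - n : ℤ) : Circle) : ℂ) := by
  rw [← Circle.coe_inv_eq_conj, zpow_sub, zpow_natCast, zpow_natCast, mul_comm, ← inv_pow]
  norm_cast

lemma integral_radial_smul_conj_pow_mul_pow_of_ne (ρ : ℝ → ℝ) {n m : ℕ} (hmn : m ≠ n) :
    ∫ w : ℂ, ρ ‖w‖ • (conj w ^ n * w ^ m) = 0 := by
  obtain ⟨c, hc⟩ := exists_circle_zpow_ne_one (sub_ne_zero.2 (Nat.cast_injective.ne hmn))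
  have hc' : conj (c : ℂ) ^ n * (c : ℂ) ^ m ≠ 1 := by
    rwa [conj_circle_pow_mul_pow, ne_eq, Circle.coe_eq_one]
  refine integral_eq_zero_of_comp_eq_smul (e := (rotation c).toMeasurableEquiv)
    (rotation c).measurePreserving hc' fun w => ?_
  simp only [LinearIsometryEquiv.coe_toMeasurableEquiv, rotation_apply, norm_mul, Circle.norm_coe,
    one_mul, map_mul, mul_pow, Complex.real_smul, smul_eq_mul]
  ring

lemma integral_exp_neg_norm_sq_smul_conj_pow_mul_pow (n m : ℕ) :
    ∫ w : ℂ, rexp (-‖w‖ ^ 2) • (conj w ^ n * w ^ m) =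
      if m = n then ((π * n ! : ℝ) : ℂ) else 0 := by
  split_ifs with hmn
  · rw [hmn, integral_exp_neg_norm_sq_smul_conj_pow_mul_pow_self]
  · exact integral_radial_smul_conj_pow_mul_pow_of_ne (fun r => rexp (-r ^ 2)) hmn

end Gaussian

section Majorant

/-- The AM-GM majorant of `e^{-x²} xᵐ αₘ`. Splitting with the factor `e^{x²/2}` balances the two
summands, so that summing over `m` leaves a Gaussian in `x`. -/
def fockMajorant (α : ℕ → ℝ) (m : ℕ) (x : ℝ) : ℝ :=
  (rexp (-(1 / 2) * x ^ 2) * (m ! * α m ^ 2) + rexp (-(3 / 2) * x ^ 2) * ((x ^ 2) ^ m / m !)) / 2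

lemma exp_neg_sq_mul_pow_mul_le_fockMajorant (α : ℕ → ℝ) (m : ℕ) (x : ℝ) :
    rexp (-x ^ 2) * (x ^ m * α m) ≤ fockMajorant α m x := by
  have hε : 0 < rexp (1 / 2 * x ^ 2) * m ! := by positivity
  have h₁ : rexp (-(1 / 2) * x ^ 2) = rexp (-x ^ 2) * rexp (1 / 2 * x ^ 2) := by
    rw [← Real.exp_add]; ring_nf
  have h₃ : rexp (-(3 / 2) * x ^ 2) = rexp (-x ^ 2) * (rexp (1 / 2 * x ^ 2))⁻¹ := by
    rw [← Real.exp_neg, ← Real.exp_add]; ring_nf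
  calc rexp (-x ^ 2) * (x ^ m * α m) = rexp (-x ^ 2) * (2 * α m * x ^ m / 2) := by ring
    _ ≤ rexp (-x ^ 2) * (((rexp (1 / 2 * x ^ 2) * m !) * α m ^ 2 +
          (rexp (1 / 2 * x ^ 2) * m !)⁻¹ * (x ^ m) ^ 2) / 2) := by
        gcongr
        exact two_mul_le_add_mul_sq hε
    _ = fockMajorant α m x := by
        rw [fockMajorant, h₁, h₃, mul_inv]
        ring

lemma hasSum_fockMajorant {α : ℕ → ℝ} (hα : Summable fun m : ℕ => (m ! : ℝ) * α m ^ 2) (x : ℝ) :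
    HasSum (fun m => fockMajorant α m x)
      (rexp (-(1 / 2) * x ^ 2) * (((∑' m : ℕ, (m ! : ℝ) * α m ^ 2) + 1) / 2)) := by
  have hexp : HasSum (fun m : ℕ => (x ^ 2) ^ m / (m ! : ℝ)) (rexp (x ^ 2)) := by
    rw [Real.exp_eq_exp_ℝ]
    exact NormedSpace.expSeries_div_hasSum_exp (x ^ 2)
  have hmul : rexp (-(3 / 2) * x ^ 2) * rexp (x ^ 2) = rexp (-(1 / 2) * x ^ 2) := by
    rw [← Real.exp_add]; ring_nf
  have h := ((hα.hasSum.mul_left (rexp (-(1 / 2) * x ^ 2))).add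
    (hexp.mul_left (rexp (-(3 / 2) * x ^ 2)))).div_const 2
  rwa [hmul, ← _root_.mul_add_one, mul_div_assoc] at h

end Majorant

section PowerSeries

variable {E : Type*} [NormedAddCommGroup E] [NormedSpace ℝ E] [NormedSpace ℂ E]
  {a : ℕ → E} {F : ℂ → E}

lemma hasSum_integral_exp_neg_norm_sq_smul_conj_pow_smul
    (hF : ∀ w : ℂ, HasSum (fun m : ℕ => w ^ m • a m) (F w))
    (ha : Summable fun m : ℕ => (m ! : ℝ) * ‖a m‖ ^ 2) (n : ℕ) :
    HasSum (fun m => ∫ w : ℂ, rexp (-‖w‖ ^ 2) • conj w ^ n • w ^ m • a m)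
      (∫ w : ℂ, rexp (-‖w‖ ^ 2) • conj w ^ n • F w) := by
  have hsum (w : ℂ) := (hasSum_fockMajorant ha ‖w‖).mul_left (‖w‖ ^ n)
  refine hasSum_integral_of_dominated_convergence
    (fun m w => ‖w‖ ^ n * fockMajorant (‖a ·‖) m ‖w‖)
    (fun m => Continuous.aestronglyMeasurable (by fun_prop)) (fun m => .of_forall fun w => ?_)
    (.of_forall fun w => (hsum w).summable) ?_
    (.of_forall fun w => ((hF w).const_smul _).const_smul _)
  · calc ‖rexp (-‖w‖ ^ 2) • conj w ^ n • w ^ m • a m‖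
        = ‖w‖ ^ n * (rexp (-‖w‖ ^ 2) * (‖w‖ ^ m * ‖a m‖)) := by
          simp only [norm_smul, norm_pow, RCLike.norm_conj, Real.norm_eq_abs, Real.abs_exp]
          ring
      _ ≤ ‖w‖ ^ n * fockMajorant (‖a ·‖) m ‖w‖ := by
          gcongr
          exact exp_neg_sq_mul_pow_mul_le_fockMajorant (‖a ·‖) m ‖w‖
  · simp only [(hsum _).tsum_eq, ← mul_assoc]
    exact (integrable_norm_pow_mul_exp_neg_mul_norm_sq volume one_half_pos n).mul_const _

lemma integral_exp_neg_norm_sq_smul_conj_pow_smul [IsScalarTower ℝ ℂ E] [CompleteSpace E]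
    (hF : ∀ w : ℂ, HasSum (fun m : ℕ => w ^ m • a m) (F w))
    (ha : Summable fun m : ℕ => (m ! : ℝ) * ‖a m‖ ^ 2) (n : ℕ) :
    ∫ w : ℂ, rexp (-‖w‖ ^ 2) • conj w ^ n • F w = (π * n !) • a n := by
  have hterm (m : ℕ) : ∫ w : ℂ, rexp (-‖w‖ ^ 2) • conj w ^ n • w ^ m • a m =
      if m = n then (π * n !) • a n else 0 := by
    calc ∫ w : ℂ, rexp (-‖w‖ ^ 2) • conj w ^ n • w ^ m • a m
        = (∫ w : ℂ, rexp (-‖w‖ ^ 2) • (conj w ^ n * w ^ m)) • a m := by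
          rw [← integral_smul_const]
          simp only [smul_assoc, mul_smul]
      _ = if m = n then (π * n !) • a n else 0 := by
          rw [integral_exp_neg_norm_sq_smul_conj_pow_mul_pow]
          split_ifs with hmn
          · rw [hmn, ← algebraMap_smul ℂ (π * n ! : ℝ) (a n), Complex.coe_algebraMap]
          · exact zero_smul ℂ (a m)
  have hsum := hasSum_integral_exp_neg_norm_sq_smul_conj_pow_smul hF ha n
  simp only [hterm] at hsum
  exact hsum.unique (hasSum_ite_eq n _)

end PowerSeries

section Slice

lemma norm_starAlgHom_complex {A : Type*} [NormedRing A] [StarRing A] [CStarRing A]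
    [NormedAlgebra ℝ A] [NormOneClass A] (ψ : ℂ →⋆ₐ[ℝ] A) (w : ℂ) : ‖ψ w‖ = ‖w‖ := by
  have h : star (ψ w) * ψ w = algebraMap ℝ A (‖w‖ ^ 2) := by
    rw [← map_star, ← map_mul, Complex.star_def, Complex.conj_mul', ← AlgHomClass.commutes ψ]
    simp
  have hsq : ‖ψ w‖ ^ 2 = ‖w‖ ^ 2 := by
    rw [sq, ← CStarRing.norm_star_mul_self, h, norm_algebraMap', norm_pow, norm_norm]
  exact (pow_left_inj₀ (norm_nonneg _) (norm_nonneg _) two_ne_zero).1 hsq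

variable {I : ℍ}

lemma mul_self_of_mem_quatSphere (hI : I ∈ quatSphere) : I * I = -1 := by
  rw [← sq, Quaternion.sq_eq_neg_normSq.2 hI.1, Quaternion.normSq_eq_norm_mul_self, hI.2]
  simp

/-- The identification `x + yi ↦ x + yI` of `ℂ` with the slice `ℂ_I`. -/
def sliceHom (hI : I ∈ quatSphere) : ℂ →⋆ₐ[ℝ] ℍ where
  __ := Complex.lift ⟨I, mul_self_of_mem_quatSphere hI⟩
  map_star' w := by
    simp [Complex.liftAux_apply, Quaternion.star_eq_neg.2 hI.1, Quaternion.algebraMap_def]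

lemma sliceVal_re_im (hI : I ∈ quatSphere) (w : ℂ) : sliceVal I (w.re, w.im) = sliceHom hI w := by
  simp [sliceVal, sliceHom, Complex.liftAux_apply, Quaternion.coe_mul_eq_smul,
    Quaternion.algebraMap_def]

/-- `ℍ` as a complex normed space, with `w : ℂ` acting by left multiplication by the corresponding
point of the slice `ℂ_I`. It depends on `I`, hence is not an instance. -/
abbrev sliceNormedSpace (hI : I ∈ quatSphere) : NormedSpace ℂ ℍ where
  __ := Module.compHom ℍ (sliceHom hI : ℂ →+* ℍ)
  norm_smul_le w q := (norm_mul_le (sliceHom hI w) q).trans_eq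
    (by rw [norm_starAlgHom_complex])

lemma fockInner_eq_integral_complex (hI : I ∈ quatSphere) (f g : ℍ → ℍ) :
    fockInner I f g =
      π⁻¹ • ∫ w : ℂ, rexp (-‖w‖ ^ 2) • (star (g (sliceHom hI w)) * f (sliceHom hI w)) := by
  rw [fockInner, ← Complex.volume_preserving_equiv_real_prod.integral_comp']
  congr 2
  funext w
  rw [Complex.measurableEquivRealProd_apply, sliceVal_re_im hI, Complex.sq_norm,
    Complex.normSq_apply, ← sq, ← sq]

lemma fockInner_pow_of_hasSum (hI : I ∈ quatSphere) {f : ℍ → ℍ} {a : ℕ → ℍ}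
    (hf : ∀ w : ℂ, HasSum (fun m : ℕ => sliceHom hI w ^ m * a m) (f (sliceHom hI w)))
    (ha : Summable fun m : ℕ => (m ! : ℝ) * ‖a m‖ ^ 2) (n : ℕ) :
    fockInner I f (fun p => p ^ n) = ((n ! : ℝ) : ℍ) * a n := by
  let := sliceNormedSpace hI
  have smul_def (w : ℂ) (q : ℍ) : w • q = sliceHom hI w * q := rfl
  have : IsScalarTower ℝ ℂ ℍ :=
    ⟨fun r w q => by rw [smul_def, smul_def, map_smul, smul_mul_assoc]⟩
  have hF (w : ℂ) : HasSum (fun m : ℕ => w ^ m • a m) (f (sliceHom hI w)) := by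
    simpa only [smul_def, map_pow] using hf w
  have hstar (w : ℂ) : star (sliceHom hI w ^ n) * f (sliceHom hI w) =
      conj w ^ n • f (sliceHom hI w) := by
    rw [smul_def, map_pow, ← Complex.star_def, map_star, star_pow]
  simp only [fockInner_eq_integral_complex hI, hstar]
  rw [integral_exp_neg_norm_sq_smul_conj_pow_smul hF ha, smul_smul, inv_mul_cancel_left₀ pi_ne_zero,
    Quaternion.coe_mul_eq_smul]

end Slice

theorem fockInner_monomial_eq_coeff (f : ℍ → ℍ) (a : ℕ → ℍ)
    (hf : ∀ p : ℍ, HasSum (fun m : ℕ => p ^ m * a m) (f p))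
    (ha : Summable fun m : ℕ => (m ! : ℝ) * ‖a m‖ ^ 2)
    (I : ℍ) (hI : I ∈ quatSphere) :
    (∀ n : ℕ, fockInner I f (fun p => p ^ n) = ((n ! : ℝ) : ℍ) * a n) ∧
      ((∀ n : ℕ, fockInner I f (fun p => p ^ n) = 0) → ∀ p : ℍ, f p = 0) := by
  have hcoeff := fockInner_pow_of_hasSum hI (fun w => hf (sliceHom hI w)) ha
  refine ⟨hcoeff, fun hzero p => ?_⟩
  have ha_zero (n : ℕ) : a n = 0 := by
    have h : (n ! : ℝ) • a n = 0 := by rw [← Quaternion.coe_mul_eq_smul, ← hcoeff, hzero]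
    exact (smul_eq_zero.1 h).resolve_left (by positivity)
  refine (hf p).unique ?_
  simpa only [ha_zero, mul_zero] using hasSum_zero
end
end

section
/- The ⋆-exponential satisfies the Representation Formula: for all x, y ∈ ℝ, all imaginary units I, J ∈ 𝕊, and all w ∈ ℍ, Σ_{n=0}^∞ (x+yJ)ⁿ wⁿ / n! = (1/2)[ Σ_{n=0}^∞ (x+yI)ⁿ wⁿ/n! + Σ_{n=0}^∞ (x−yI)ⁿ wⁿ/n! ] + J · (1/2) [ I ( Σ_{n=0}^∞ (x−yI)ⁿ wⁿ/n! − Σ_{n=0}^∞ (x+yI)ⁿ wⁿ/n! ) ]. In particular, e_⋆^{qw} is the unique slice regular extension to ℍ of the function z ↦ Σ_{n=0}^∞ zⁿ wⁿ/n! defined on a complex plane ℂ_I. -/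
/-!
Each `K` with `K * K = -1` extends to the algebra homomorphism `x + y i ↦ x + y K` from `ℂ`, so a
power `(x + y K) ^ n` is affine in `K` with real coefficients that do not depend on `K`.
An affine function of `K` is recovered from its values at `I` and `-I`, and the formula recovering
it is linear and continuous, so it passes from the terms of the series to their sums.
-/

open MeasureTheory Real Nat

noncomputable section

local notation "ℍ" => Quaternion ℝ

/-- The ⋆-exponential `e_⋆^{pw} = Σ pⁿ wⁿ / n!`. -/
def starExp (p w : ℍ) : ℍ := ∑' n : ℕ, ((n ! : ℝ)⁻¹) • (p ^ n * w ^ n)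

open Complex (liftAux)
open scoped ComplexConjugate

section Algebra

variable {A : Type*} [Ring A] [Algebra ℝ A] {I J : A}

theorem liftAux_mk (hI : I * I = -1) (x y : ℝ) :
    liftAux I hI ⟨x, y⟩ = algebraMap ℝ A x + algebraMap ℝ A y * I := by
  rw [Complex.liftAux_apply, Algebra.smul_def]

theorem liftAux_conj_mk (hI : I * I = -1) (x y : ℝ) :
    liftAux I hI (conj ⟨x, y⟩) = algebraMap ℝ A x - algebraMap ℝ A y * I := by
  rw [Complex.liftAux_apply, Complex.conj_re, Complex.conj_im, neg_smul, Algebra.smul_def,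
    sub_eq_add_neg]

theorem liftAux_add_liftAux_conj (hI : I * I = -1) (z : ℂ) :
    liftAux I hI z + liftAux I hI (conj z) = (2 : ℝ) • algebraMap ℝ A z.re := by
  simp only [Complex.liftAux_apply, Complex.conj_re, Complex.conj_im]
  module

theorem mul_liftAux_conj_sub_liftAux (hI : I * I = -1) (z : ℂ) :
    I * (liftAux I hI (conj z) - liftAux I hI z) = (2 : ℝ) • algebraMap ℝ A z.im := by
  simp only [Complex.liftAux_apply, Complex.conj_re, Complex.conj_im, add_sub_add_left_eq_sub,
    ← sub_smul, mul_smul_comm, hI, Algebra.algebraMap_eq_smul_one]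
  module

theorem liftAux_representation_formula (hI : I * I = -1) (hJ : J * J = -1) (z : ℂ) :
    liftAux J hJ z =
      (2 : ℝ)⁻¹ • (liftAux I hI z + liftAux I hI (conj z)) +
        J * ((2 : ℝ)⁻¹ • (I * (liftAux I hI (conj z) - liftAux I hI z))) := by
  rw [liftAux_add_liftAux_conj, mul_liftAux_conj_sub_liftAux, inv_smul_smul₀ two_ne_zero,
    inv_smul_smul₀ two_ne_zero, Complex.liftAux_apply, Algebra.smul_def, Algebra.commutes]

theorem hasSum_liftAux_mul_representation_formula [TopologicalSpace A] [IsTopologicalRing A]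
    {ι : Type*} (hI : I * I = -1) (hJ : J * J = -1) {z : ι → ℂ} {a : ι → A} {s t : A}
    (hs : HasSum (fun i ↦ liftAux I hI (z i) * a i) s)
    (ht : HasSum (fun i ↦ liftAux I hI (conj (z i)) * a i) t) :
    HasSum (fun i ↦ liftAux J hJ (z i) * a i)
      ((2 : ℝ)⁻¹ • (s + t) + J * ((2 : ℝ)⁻¹ • (I * (t - s)))) := by
  have hterm : ∀ i, liftAux J hJ (z i) * a i =
      (2 : ℝ)⁻¹ • (liftAux I hI (z i) * a i + liftAux I hI (conj (z i)) * a i) +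
        J * ((2 : ℝ)⁻¹ •
          (I * (liftAux I hI (conj (z i)) * a i - liftAux I hI (z i) * a i))) := by
    intro i
    rw [liftAux_representation_formula hI hJ]
    simp only [add_mul, sub_mul, smul_mul_assoc, mul_assoc]
  simp only [hterm]
  exact ((hs.add ht).const_smul _).add ((((ht.sub hs).mul_left I).const_smul _).mul_left J)

/-- The `n`-th term of the ⋆-exponential series `Σ pⁿ wⁿ / n!`, in an arbitrary real algebra. -/
def starExpTerm (p w : A) (n : ℕ) : A := (n ! : ℝ)⁻¹ • (p ^ n * w ^ n)

theorem starExpTerm_liftAux (hI : I * I = -1) (z : ℂ) (w : A) (n : ℕ) :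
    starExpTerm (liftAux I hI z) w n =
      liftAux I hI (z ^ n) * ((n ! : ℝ)⁻¹ • w ^ n) := by
  rw [starExpTerm, map_pow, mul_smul_comm]

end Algebra

section Banach

variable {A : Type*} [NormedRing A] [NormedAlgebra ℝ A] [CompleteSpace A]

theorem summable_starExpTerm (p w : A) : Summable (starExpTerm p w) := by
  refine .of_norm_bounded_eventually_nat (Real.summable_pow_div_factorial (‖p‖ * ‖w‖)) ?_
  filter_upwards [Filter.eventually_gt_atTop 0] with n hn
  calc ‖starExpTerm p w n‖ = (n ! : ℝ)⁻¹ * ‖p ^ n * w ^ n‖ := by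
        rw [starExpTerm, norm_smul, norm_inv, Real.norm_natCast]
    _ ≤ (n ! : ℝ)⁻¹ * (‖p‖ ^ n * ‖w‖ ^ n) := by
        gcongr
        exact norm_mul_le_of_le (norm_pow_le' p hn) (norm_pow_le' w hn)
    _ = (‖p‖ * ‖w‖) ^ n / n ! := by rw [mul_pow, div_eq_inv_mul]

theorem hasSum_liftAux_pow_mul {I : A} (hI : I * I = -1) (z : ℂ) (w : A) :
    HasSum (fun n ↦ liftAux I hI (z ^ n) * ((n ! : ℝ)⁻¹ • w ^ n))
      (∑' n, starExpTerm (liftAux I hI z) w n) := by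
  simp only [← starExpTerm_liftAux]
  exact (summable_starExpTerm _ w).hasSum

theorem starExp_representation_formula_general {I J : A} (hI : I * I = -1) (hJ : J * J = -1)
    (x y : ℝ) (w : A) :
    ∑' n, starExpTerm (algebraMap ℝ A x + algebraMap ℝ A y * J) w n =
      (2 : ℝ)⁻¹ • (∑' n, starExpTerm (algebraMap ℝ A x + algebraMap ℝ A y * I) w n +
          ∑' n, starExpTerm (algebraMap ℝ A x - algebraMap ℝ A y * I) w n) +
        J * ((2 : ℝ)⁻¹ •
          (I * (∑' n, starExpTerm (algebraMap ℝ A x - algebraMap ℝ A y * I) w n -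
            ∑' n, starExpTerm (algebraMap ℝ A x + algebraMap ℝ A y * I) w n))) := by
  simp only [← liftAux_mk hI, ← liftAux_mk hJ, ← liftAux_conj_mk hI]
  have hz := hasSum_liftAux_pow_mul hI ⟨x, y⟩ w
  have hconj := hasSum_liftAux_pow_mul hI (conj ⟨x, y⟩) w
  simp only [← map_pow conj] at hconj
  exact (hasSum_liftAux_pow_mul hJ ⟨x, y⟩ w).unique
    (hasSum_liftAux_mul_representation_formula hI hJ hz hconj)

end Banach

theorem mul_self_eq_neg_one_of_mem_quatSphere {K : ℍ} (hK : K ∈ quatSphere) : K * K = -1 := by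
  rw [← sq, Quaternion.sq_eq_neg_normSq.2 hK.1, Quaternion.normSq_eq_norm_mul_self, hK.2, mul_one,
    Quaternion.coe_one]

theorem starExp_representation_formula (x y : ℝ) (I J : ℍ)
    (hI : I ∈ quatSphere) (hJ : J ∈ quatSphere) (w : ℍ) :
    starExp ((x : ℍ) + (y : ℍ) * J) w =
      (2 : ℝ)⁻¹ • (starExp ((x : ℍ) + (y : ℍ) * I) w + starExp ((x : ℍ) - (y : ℍ) * I) w) +
        J * ((2 : ℝ)⁻¹ •
          (I * (starExp ((x : ℍ) - (y : ℍ) * I) w - starExp ((x : ℍ) + (y : ℍ) * I) w))) :=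
  starExp_representation_formula_general (mul_self_eq_neg_one_of_mem_quatSphere hI)
    (mul_self_eq_neg_one_of_mem_quatSphere hJ) x y w
end
end
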